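/- Let n ≥ 3. There exists a constant K > 0 (depending only on n) such that the following holds for every p and every ε ≥ 0: if g, h : [n]^p → {0,1} are ε-cross-independent, then n(n − 2) · μ(g) · μ(h) ≤ 1 − μ(g) − μ(h) + K·√ε. -/

import Mathlib

/-- Probability of an event under the uniform distribution on a finite type. -/
noncomputable def unifPr {α : Type*} [Fintype α] (P : α → Prop) : ℝ :=
  (Nat.card {a : α // P a} : ℝ) / Fintype.card α

noncomputable def exE (n p : ℕ) (f : (Fin p → Fin n) → ℝ) : ℝ := (∑ x, f x) / (n : ℝ) ^ p

noncomputable def exB (n p : ℕ) (f k : (Fin p → Fin n) → ℝ) : ℝ :=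
  (∑ w : Fin p → {q : Fin n × Fin n // q.1 ≠ q.2},
    f (fun i => (w i).val.1) * k (fun i => (w i).val.2)) / ((n : ℝ) * ((n : ℝ) - 1)) ^ p

theorem sum_cons {α : Type*} [Fintype α] (p : ℕ) (F : (Fin (p + 1) → α) → ℝ) :
    ∑ x, F x = ∑ a, ∑ y : Fin p → α, F (Fin.cons a y) := by
  rw [← Fintype.sum_prod_type']
  exact (Fintype.sum_equiv (Fin.consEquiv (fun _ => α)) _ _ (fun x => rfl)).symm

theorem exE_succ (n p : ℕ) (f : (Fin (p + 1) → Fin n) → ℝ) :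
    exE n (p + 1) f = (∑ a, exE n p (fun y => f (Fin.cons a y))) / n := by
  unfold exE
  rw [sum_cons, ← Finset.sum_div, pow_succ, div_div]

theorem exB_succ (n p : ℕ) (f k : (Fin (p + 1) → Fin n) → ℝ) :
    exB n (p + 1) f k = (∑ q : {q : Fin n × Fin n // q.1 ≠ q.2},
      exB n p (fun y => f (Fin.cons q.val.1 y)) (fun y => k (Fin.cons q.val.2 y)))
        / ((n : ℝ) * ((n : ℝ) - 1)) := by
  unfold exB
  rw [sum_cons, ← Finset.sum_div, pow_succ, div_div]
  congr 1
  refine Finset.sum_congr rfl fun a _ => Finset.sum_congr rfl fun w _ => ?_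
  congr 2
  · funext i
    refine Fin.cases ?_ (fun j => ?_) i <;> simp
  · funext i
    refine Fin.cases ?_ (fun j => ?_) i <;> simp

theorem sum_ne (n : ℕ) (φ : Fin n → Fin n → ℝ) :
    ∑ q : {q : Fin n × Fin n // q.1 ≠ q.2}, φ q.val.1 q.val.2
      = ∑ a, ∑ b, φ a b - ∑ a, φ a a := by
  have h1 : ∑ q : {q : Fin n × Fin n // q.1 ≠ q.2}, φ q.val.1 q.val.2
      = ∑ q : Fin n × Fin n, if q.1 ≠ q.2 then φ q.1 q.2 else 0 := by
    rw [← Finset.sum_filter]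
    exact (Finset.sum_subtype (Finset.univ.filter fun q : Fin n × Fin n => q.1 ≠ q.2)
      (by simp) (fun q => φ q.1 q.2)).symm
  rw [h1, Fintype.sum_prod_type, ← Finset.sum_sub_distrib]
  refine Finset.sum_congr rfl fun a _ => ?_
  rw [eq_sub_iff_add_eq]
  have : φ a a = ∑ b, if a = b then φ a b else 0 := by simp
  rw [this, ← Finset.sum_add_distrib]
  refine Finset.sum_congr rfl fun b _ => ?_
  by_cases h : a = b <;> simp [h]

theorem key (n : ℕ) (hn : 3 ≤ n) (p : ℕ) : ∀ f k : (Fin p → Fin n) → ℝ,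
    exB n p f k ≤ exE n p f * exE n p k + 1 / (2 * ((n : ℝ) - 1)) *
      ((exE n p (fun x => f x ^ 2) - exE n p f ^ 2)
        + (exE n p (fun x => k x ^ 2) - exE n p k ^ 2)) := by
  have hn' : (3 : ℝ) ≤ n := by exact_mod_cast hn
  induction p with
  | zero =>
    intro f k
    unfold exB exE
    simp only [Fintype.sum_unique, pow_zero, div_one, sub_self, add_zero, mul_zero]
    apply le_of_eq
    congr 2 <;> exact Subsingleton.elim _ _
  | succ p ih =>
    intro f k
    rw [exB_succ, exE_succ, exE_succ, exE_succ, exE_succ]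
    set m : Fin n → ℝ := fun a => exE n p (fun y => f (Fin.cons a y)) with hm
    set l : Fin n → ℝ := fun a => exE n p (fun y => k (Fin.cons a y)) with hl
    set u : Fin n → ℝ := fun a => exE n p (fun y => f (Fin.cons a y) ^ 2) with hu
    set v : Fin n → ℝ := fun a => exE n p (fun y => k (Fin.cons a y) ^ 2) with hv
    have h1 : (∑ q : {q : Fin n × Fin n // q.1 ≠ q.2},
      exB n p (fun y => f (Fin.cons q.val.1 y)) (fun y => k (Fin.cons q.val.2 y)))
      ≤ ∑ q : {q : Fin n × Fin n // q.1 ≠ q.2}, (fun a b => m a * l b + 1 / (2 * ((n : ℝ) - 1)) *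
        ((u a - m a ^ 2) + (v b - l b ^ 2))) q.val.1 q.val.2 :=
      Finset.sum_le_sum fun q _ => ih _ _
    rw [sum_ne n (fun a b => m a * l b + 1 / (2 * ((n : ℝ) - 1)) *
        ((u a - m a ^ 2) + (v b - l b ^ 2)))] at h1
    simp only [Finset.sum_add_distrib, ← Finset.mul_sum, Finset.sum_sub_distrib,
      ← Finset.sum_mul, Finset.sum_const, Finset.card_univ, Fintype.card_fin, nsmul_eq_mul] at h1
    have h2 := sq_sum_le_card_mul_sum_sq (s := Finset.univ) (f := fun a => m a + l a)
    simp only [add_sq, Finset.sum_add_distrib, mul_assoc, ← Finset.mul_sum, Finset.card_univ,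
      Fintype.card_fin] at h2
    have hN : (0 : ℝ) < (n : ℝ) - 1 := by linarith
    have hn0 : (0 : ℝ) < n := by linarith
    rw [div_le_iff₀ (by positivity)]
    refine h1.trans ?_
    generalize (∑ a, m a) = M at *
    generalize (∑ a, l a) = L at *
    generalize (∑ a, u a) = U at *
    generalize (∑ a, v a) = V at *
    generalize (∑ a, m a ^ 2) = M2 at *
    generalize (∑ a, l a ^ 2) = L2 at *
    generalize (∑ a, m a * l a) = ML at *
    rw [← sub_nonneg]
    convert div_nonneg (sub_nonneg.2 h2) (by positivity : (0 : ℝ) ≤ 2 * n) using 1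
    field_simp
    ring

theorem unifPr_eq {α : Type*} [Fintype α] (P : α → Prop) [DecidablePred P] :
    unifPr P = (∑ a, if P a then (1 : ℝ) else 0) / Fintype.card α := by
  unfold unifPr
  rw [Nat.card_eq_fintype_card, Fintype.card_subtype, Finset.sum_boole]

theorem card_ne (n : ℕ) : (Fintype.card {q : Fin n × Fin n // q.1 ≠ q.2} : ℝ)
    = (n : ℝ) * ((n : ℝ) - 1) := by
  have := sum_ne n (fun _ _ => 1)
  simp only [Finset.sum_const, Finset.card_univ, nsmul_eq_mul, mul_one, Fintype.card_fin] at this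
  rw [this]; ring

theorem unifPr_bd {α : Type*} [Fintype α] (P : α → Prop) : 0 ≤ unifPr P ∧ unifPr P ≤ 1 := by
  classical
  unfold unifPr
  refine ⟨by positivity, div_le_one_of_le₀ ?_ (by positivity)⟩
  rw [Nat.card_eq_fintype_card]
  exact_mod_cast Fintype.card_subtype_le P

theorem stmt12 (n : ℕ) (hn : 3 ≤ n) :
    ∃ K > (0 : ℝ), ∀ p : ℕ, ∀ ε : ℝ, 0 ≤ ε →
      ∀ g h : (Fin p → Fin n) → Bool,
        unifPr (fun w : Fin p → {q : Fin n × Fin n // q.1 ≠ q.2} =>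
          g (fun k => (w k).val.1) = true ∧ h (fun k => (w k).val.2) = true) ≤ ε →
        (n : ℝ) * ((n : ℝ) - 2) * unifPr (fun x => g x = true)
            * unifPr (fun x => h x = true)
          ≤ 1 - unifPr (fun x => g x = true) - unifPr (fun x => h x = true)
            + K * Real.sqrt ε := by
  have hn' : (3 : ℝ) ≤ n := by exact_mod_cast hn
  refine ⟨2 * (n : ℝ) ^ 2, by positivity, ?_⟩
  intro p ε hε g h hB
  set G : (Fin p → Fin n) → ℝ := fun x => if g x = true then 1 else 0 with hG
  set H : (Fin p → Fin n) → ℝ := fun x => if h x = true then 1 else 0 with hH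
  have ea : unifPr (fun x => g x = true) = exE n p G := by
    rw [unifPr_eq]; simp [exE, hG]
  have eb : unifPr (fun x => h x = true) = exE n p H := by
    rw [unifPr_eq]; simp [exE, hH]
  have eB : unifPr (fun w : Fin p → {q : Fin n × Fin n // q.1 ≠ q.2} =>
          g (fun k => (w k).val.1) = true ∧ h (fun k => (w k).val.2) = true) = exB n p G H := by
    rw [unifPr_eq]
    unfold exB
    rw [Fintype.card_fun, Nat.cast_pow, card_ne, Fintype.card_fin]
    congr 1
    refine Finset.sum_congr rfl fun w _ => ?_
    simp only [hG, hH, ite_and, ite_mul, one_mul, zero_mul]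
  obtain ⟨ha0, ha1⟩ := unifPr_bd (fun x => g x = true)
  obtain ⟨hb0, hb1⟩ := unifPr_bd (fun x => h x = true)
  have hB0 := (unifPr_bd (fun w : Fin p → {q : Fin n × Fin n // q.1 ≠ q.2} =>
          g (fun k => (w k).val.1) = true ∧ h (fun k => (w k).val.2) = true)).1
  rw [eB] at hB hB0
  rw [ea] at ha0 ha1 ⊢
  rw [eb] at hb0 hb1 ⊢
  have hN : (0 : ℝ) < (n : ℝ) - 1 := by linarith
  have hq : ∀ s : ℝ, 0 ≤ (1 / (2 * ((n : ℝ) - 1)) * (exE n p G - exE n p G ^ 2)) * (s * s)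
      + (exE n p G * exE n p H - exB n p G H) * s
      + 1 / (2 * ((n : ℝ) - 1)) * (exE n p H - exE n p H ^ 2) := by
    intro s
    have h1 := key n hn p (fun x => s * G x) H
    have e1 : exB n p (fun x => s * G x) H = s * exB n p G H := by
      unfold exB
      rw [mul_div_assoc', Finset.mul_sum]
      simp only [mul_assoc]
    have e2 : exE n p (fun x => s * G x) = s * exE n p G := by
      unfold exE
      rw [mul_div_assoc', Finset.mul_sum]
    have e3 : exE n p (fun x => (s * G x) ^ 2) = s ^ 2 * exE n p G := by
      unfold exE
      rw [mul_div_assoc', Finset.mul_sum]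
      simp [mul_pow, hG]
    have e4 : exE n p (fun x => H x ^ 2) = exE n p H := by
      simp [exE, hH]
    rw [e1, e2, e3, e4] at h1
    linarith
  have hd := discrim_le_zero hq
  unfold discrim at hd
  generalize exE n p G = a at *
  generalize exE n p H = b at *
  generalize exB n p G H = B at *
  have hd2 : ((n : ℝ) - 1) ^ 2 * (a * b - B) ^ 2 ≤ (a * b) * ((1 - a) * (1 - b)) := by
    have : 4 * (1 / (2 * ((n : ℝ) - 1)) * (a - a ^ 2)) * (1 / (2 * ((n : ℝ) - 1)) * (b - b ^ 2))
      = (a * b) * ((1 - a) * (1 - b)) / ((n : ℝ) - 1) ^ 2 := by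
      field_simp
      ring
    rw [this, sub_nonpos, le_div_iff₀ (by positivity)] at hd
    linarith
  have hX0 : 0 ≤ a * b := mul_nonneg ha0 hb0
  have hX1 : a * b ≤ 1 := mul_le_one₀ ha1 hb0 hb1
  have hT0 : 0 ≤ (1 - a) * (1 - b) := mul_nonneg (by linarith) (by linarith)
  have hmain : ((n : ℝ) - 1) ^ 2 * (a * b) ≤ (1 - a) * (1 - b) + 2 * ((n : ℝ) - 1) ^ 2 * B := by
    rcases hX0.eq_or_lt with h0 | h0
    · rw [← h0]
      have : 0 ≤ 2 * ((n : ℝ) - 1) ^ 2 * B := by positivity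
      linarith
    · refine le_of_mul_le_mul_left ?_ h0
      have : 0 ≤ ((n : ℝ) - 1) ^ 2 * B ^ 2 := by positivity
      linarith
  have hr0 := Real.sqrt_nonneg ε
  have hr2 := Real.sq_sqrt hε
  generalize Real.sqrt ε = r at *
  rcases le_total r 1 with h1 | h1
  · have : B ≤ r := by nlinarith
    have : 2 * ((n : ℝ) - 1) ^ 2 * B ≤ 2 * (n : ℝ) ^ 2 * r := by
      gcongr <;> linarith
    linarith
  · have h2 : 2 * (n : ℝ) ^ 2 ≤ 2 * (n : ℝ) ^ 2 * r := le_mul_of_one_le_right (by positivity) h1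
    have h3 : (n : ℝ) * ((n : ℝ) - 2) * (a * b) ≤ (n : ℝ) * ((n : ℝ) - 2) :=
      mul_le_of_le_one_right (by nlinarith) hX1
    nlinarith
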